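/- There exist absolute constants c, C > 0 such that the following holds for all sufficiently large n. Let G be a finite connected graph with n vertices and m edges, consider the lazy simple random walk on G, and let S ⊆ V with |S| = s and total degree d(S) ≤ m/(C·log n). Then for every start vertex u ∉ S and every integer t ≥ C·m/(s·(1−λmax)), the probability that the walk started at u visits no vertex of S during steps 0,1,…,t is at most c·exp(−t·d(S)·(1−λmax)/(14m)). -/

import Mathlib

open scoped ENNReal Classical

-- `lambdaMax P` : the largest absolute value of an eigenvalue of `P` other than the
-- eigenvalue `1` (for an ergodic chain on a connected graph, `max(|λ₂|,…,|λₙ|)`).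
noncomputable def lambdaMax {V : Type*} [Fintype V] [DecidableEq V] (P : Matrix V V ℝ) : ℝ :=
  sSup {x : ℝ | ∃ μ ∈ spectrum ℝ P, μ ≠ 1 ∧ x = |μ|}

-- Transition matrix of the lazy simple random walk on `G`.
noncomputable def lazyMatrix {V : Type*} [Fintype V] [DecidableEq V] (G : SimpleGraph V) :
    Matrix V V ℝ :=
  Matrix.of fun u v =>
    (if u = v then (1 : ℝ) / 2 else 0) +
      (if G.Adj u v then 1 / (2 * ((G.neighborSet u).ncard : ℝ)) else 0)

-- `avoidProb P S u t` : the probability that the chain with transition matrix `P`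
-- started at `u` avoids the set `S` at each of the times `0, 1, …, t`.
noncomputable def avoidProb {V : Type*} [Fintype V] [DecidableEq V] (P : Matrix V V ℝ)
    (S : Finset V) (u : V) (t : ℕ) : ℝ :=
  if u ∈ S then 0
  else ∑ y, ((Matrix.of fun x y => if y ∈ S then 0 else P x y) ^ t) u y

/-!
Let the chain `P` be reversible with respect to `π`, and let `l` bound the absolute values of its
eigenvalues other than `1`. Splitting off constants in `L²(π)` gives
`⟪g, P f⟫ ≤ (1 - l) |E f| |E g| + l ‖f‖ ‖g‖`. If `f` and `g` vanish on `S`, then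
`|E f| ≤ √(1 - π(S)) ‖f‖` by Cauchy–Schwarz, and likewise for `g`, so each step of the walk killed
on `S` shrinks the `L²` norm by the factor `1 - (1 - l) π(S)`. This controls the survival
probability on average over the starting point. Ignoring `S` during the first
`log (1 / √(π u)) / (1 - l)` steps lets the walk mix and turns the average into a bound at the
single vertex `u`, at the cost of a factor `2`. When `d(S) ≤ m / log n`, the exponential factor lost
in the ignored steps is bounded by a constant.
-/

open Finset Matrix
open Module.End (HasEigenvalue eigenspace hasEigenvalue_iff_mem_spectrum)
open scoped RealInnerProductSpace

section SpectralGap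

variable {E : Type*} [NormedAddCommGroup E] [InnerProductSpace ℝ E]

theorem norm_map_le_of_mem_eigenspace_orthogonal [FiniteDimensional ℝ E] {T : E →ₗ[ℝ] E}
    (hT : T.IsSymmetric) {μ₀ l : ℝ} (hl : 0 ≤ l)
    (hspec : ∀ μ, HasEigenvalue T μ → μ ≠ μ₀ → |μ| ≤ l) {x : E}
    (hx : x ∈ (eigenspace T μ₀)ᗮ) : ‖T x‖ ≤ l * ‖x‖ := by
  let b := hT.eigenvectorBasis rfl
  have coord_sq_le (i) : ⟪b i, T x⟫ ^ 2 ≤ l ^ 2 * ⟪b i, x⟫ ^ 2 := by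
    obtain ⟨μ, hb⟩ : ∃ μ : ℝ, Module.End.HasEigenvector T μ (b i) :=
      ⟨_, hT.hasEigenvector_eigenvectorBasis rfl i⟩
    rw [← hT (b i) x, hb.apply_eq_smul, real_inner_smul_left, mul_pow]
    by_cases hμ : μ = μ₀
    · have : ⟪b i, x⟫ = 0 := hx _ (hμ ▸ hb.1)
      simp [this]
    · have : |μ| ≤ |l| := (hspec μ (Module.End.hasEigenvalue_of_hasEigenvector hb) hμ).trans
        (le_abs_self l)
      exact mul_le_mul_of_nonneg_right (sq_le_sq.2 this) (sq_nonneg _)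
  refine le_of_sq_le_sq ?_ (by positivity)
  calc ‖T x‖ ^ 2 = ∑ i, ⟪b i, T x⟫ ^ 2 := (b.sum_sq_inner_right _).symm
    _ ≤ ∑ i, l ^ 2 * ⟪b i, x⟫ ^ 2 := sum_le_sum fun i _ => coord_sq_le i
    _ = (l * ‖x‖) ^ 2 := by rw [← mul_sum, b.sum_sq_inner_right, mul_pow]

/-- A symmetric operator `T` that fixes the unit vector `e` and shrinks norms by the factor `l` on
the orthogonal complement of `e`: the `L²` form of a spectral gap `1 - l`. -/
structure HasSpectralGap (T : E →ₗ[ℝ] E) (e : E) (l : ℝ) : Prop where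
  isSymmetric : T.IsSymmetric
  norm_eq_one : ‖e‖ = 1
  map_eq_self : T e = e
  norm_map_le : ∀ x, ⟪e, x⟫ = 0 → ‖T x‖ ≤ l * ‖x‖

variable {e : E}

theorem inner_sub_inner_smul_self (he : ‖e‖ = 1) (x : E) : ⟪e, x - ⟪e, x⟫ • e⟫ = 0 := by
  rw [inner_sub_right, real_inner_smul_right, real_inner_self_eq_norm_sq, he]
  ring

theorem norm_sub_inner_smul_sq (he : ‖e‖ = 1) (x : E) :
    ‖x - ⟪e, x⟫ • e‖ ^ 2 = ‖x‖ ^ 2 - ⟪e, x⟫ ^ 2 := by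
  rw [norm_sub_sq_real, real_inner_smul_right, norm_smul, he, Real.norm_eq_abs, mul_one, sq_abs,
    real_inner_comm]
  ring

theorem norm_sub_inner_smul_le (he : ‖e‖ = 1) (x : E) : ‖x - ⟪e, x⟫ • e‖ ≤ ‖x‖ :=
  le_of_sq_le_sq (by rw [norm_sub_inner_smul_sq he]; linarith [sq_nonneg ⟪e, x⟫]) (norm_nonneg x)

theorem abs_inner_mul_add_norm_mul_le (he : ‖e‖ = 1) (x y : E) :
    |⟪e, x⟫| * |⟪e, y⟫| + ‖x - ⟪e, x⟫ • e‖ * ‖y - ⟪e, y⟫ • e‖ ≤ ‖x‖ * ‖y‖ := by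
  refine le_of_sq_le_sq ?_ (by positivity)
  have hx := norm_sub_inner_smul_sq he x
  have hy := norm_sub_inner_smul_sq he y
  set p := ‖x - ⟪e, x⟫ • e‖
  set q := ‖y - ⟪e, y⟫ • e‖
  calc (|⟪e, x⟫| * |⟪e, y⟫| + p * q) ^ 2
      ≤ (|⟪e, x⟫| ^ 2 + p ^ 2) * (|⟪e, y⟫| ^ 2 + q ^ 2) := by
        linarith [sq_nonneg (|⟪e, x⟫| * q - |⟪e, y⟫| * p)]
    _ = (‖x‖ * ‖y‖) ^ 2 := by rw [sq_abs, sq_abs, hx, hy]; ring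

namespace HasSpectralGap

variable {T : E →ₗ[ℝ] E} {l : ℝ}

theorem inner_map (h : HasSpectralGap T e l) (x : E) : ⟪e, T x⟫ = ⟪e, x⟫ := by
  rw [← h.isSymmetric, h.map_eq_self]

theorem map_sub_inner_smul (h : HasSpectralGap T e l) (x : E) :
    T (x - ⟪e, x⟫ • e) = T x - ⟪e, x⟫ • e := by
  rw [map_sub, map_smul, h.map_eq_self]

theorem norm_map_sub_le (h : HasSpectralGap T e l) (x : E) :
    ‖T x - ⟪e, x⟫ • e‖ ≤ l * ‖x - ⟪e, x⟫ • e‖ := by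
  rw [← h.map_sub_inner_smul]
  exact h.norm_map_le _ (inner_sub_inner_smul_self h.norm_eq_one x)

theorem inner_map_le (h : HasSpectralGap T e l) (hl : 0 ≤ l) (x y : E) :
    ⟪y, T x⟫ ≤ (1 - l) * (|⟪e, x⟫| * |⟪e, y⟫|) + l * (‖x‖ * ‖y‖) := by
  set p := ‖x - ⟪e, x⟫ • e‖
  set q := ‖y - ⟪e, y⟫ • e‖
  have inner_eq : ⟪y, T x⟫ = ⟪e, x⟫ * ⟪e, y⟫ + ⟪y - ⟪e, y⟫ • e, T x - ⟪e, x⟫ • e⟫ := by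
    simp only [inner_sub_left, inner_sub_right, real_inner_smul_left, real_inner_smul_right,
      h.inner_map, real_inner_self_eq_norm_sq, h.norm_eq_one, real_inner_comm y e]
    ring
  calc ⟪y, T x⟫ ≤ |⟪e, x⟫| * |⟪e, y⟫| + q * ‖T x - ⟪e, x⟫ • e‖ := by
        rw [inner_eq, ← abs_mul]
        exact add_le_add (le_abs_self _) (real_inner_le_norm _ _)
    _ ≤ |⟪e, x⟫| * |⟪e, y⟫| + q * (l * p) := by gcongr; exact h.norm_map_sub_le x
    _ = (1 - l) * (|⟪e, x⟫| * |⟪e, y⟫|) + l * (|⟪e, x⟫| * |⟪e, y⟫| + p * q) := by ring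
    _ ≤ _ := by gcongr; exact abs_inner_mul_add_norm_mul_le h.norm_eq_one x y

theorem norm_pow_apply_sub_le (h : HasSpectralGap T e l) (hl : 0 ≤ l) (k : ℕ) (x : E) :
    ‖(T ^ k) x - ⟪e, x⟫ • e‖ ≤ l ^ k * ‖x‖ := by
  suffices ⟪e, (T ^ k) x⟫ = ⟪e, x⟫ ∧ ‖(T ^ k) x - ⟪e, x⟫ • e‖ ≤ l ^ k * ‖x‖ from this.2
  induction k with
  | zero => simpa using norm_sub_inner_smul_le h.norm_eq_one x
  | succ k ih =>
    rw [pow_succ', Module.End.mul_apply, h.inner_map]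
    refine ⟨ih.1, ?_⟩
    have step := h.norm_map_sub_le ((T ^ k) x)
    rw [ih.1] at step
    calc ‖T ((T ^ k) x) - ⟪e, x⟫ • e‖ ≤ l * ‖(T ^ k) x - ⟪e, x⟫ • e‖ := step
      _ ≤ l * (l ^ k * ‖x‖) := by gcongr; exact ih.2
      _ = l ^ (k + 1) * ‖x‖ := by ring

end HasSpectralGap

end SpectralGap

section Stochastic

variable {V : Type*} [Fintype V] [DecidableEq V]

theorem abs_le_lambdaMax {P : Matrix V V ℝ} {μ : ℝ} (hμ : μ ∈ spectrum ℝ P) (hμ1 : μ ≠ 1) :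
    |μ| ≤ lambdaMax P := by
  refine le_csSup ((P.finite_real_spectrum.image abs).subset ?_).bddAbove ⟨μ, hμ, hμ1, rfl⟩
  rintro _ ⟨ν, hν, -, rfl⟩
  exact ⟨ν, hν, rfl⟩

theorem lambdaMax_nonneg (P : Matrix V V ℝ) : 0 ≤ lambdaMax P :=
  Real.sSup_nonneg <| by
    rintro _ ⟨ν, -, -, rfl⟩
    exact abs_nonneg ν

variable {P : Matrix V V ℝ}

theorem mulVec_le_mulVec_of_mem_rowStochastic (hP : P ∈ rowStochastic ℝ V) {f g : V → ℝ}
    (hfg : f ≤ g) : P *ᵥ f ≤ P *ᵥ g :=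
  fun _ => sum_le_sum fun v _ => mul_le_mul_of_nonneg_left (hfg v) (nonneg_of_mem_rowStochastic hP)

theorem norm_mulVec_le_of_mem_rowStochastic (hP : P ∈ rowStochastic ℝ V) (f : V → ℝ) :
    ‖P *ᵥ f‖ ≤ ‖f‖ := by
  refine (pi_norm_le_iff_of_nonneg (norm_nonneg f)).2 fun x => ?_
  calc ‖∑ y, P x y * f y‖ ≤ ∑ y, P x y * ‖f‖ := norm_sum_le_of_le _ fun y _ => by
        rw [norm_mul, Real.norm_of_nonneg (nonneg_of_mem_rowStochastic hP)]
        exact mul_le_mul_of_nonneg_left (norm_le_pi_norm f y) (nonneg_of_mem_rowStochastic hP)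
    _ = ‖f‖ := by rw [← sum_mul, sum_row_of_mem_rowStochastic hP, one_mul]

theorem lambdaMax_le_one_of_mem_rowStochastic (hP : P ∈ rowStochastic ℝ V) :
    lambdaMax P ≤ 1 := by
  refine Real.sSup_le ?_ zero_le_one
  rintro _ ⟨μ, hμ, -, rfl⟩
  rw [← spectrum_toLin', ← hasEigenvalue_iff_mem_spectrum] at hμ
  obtain ⟨f, hf⟩ := hμ.exists_hasEigenvector
  have hPf : P *ᵥ f = μ • f := hf.apply_eq_smul
  have hle := norm_mulVec_le_of_mem_rowStochastic hP f
  rw [hPf, norm_smul] at hle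
  exact (mul_le_iff_le_one_left (norm_pos_iff.2 hf.2)).1 hle

variable (P) (S : Finset V)

theorem avoidProb_zero (u : V) : avoidProb P S u 0 = if u ∈ S then 0 else 1 := by
  simp [avoidProb, Matrix.one_apply]

theorem avoidProb_of_mem {u : V} (hu : u ∈ S) (t : ℕ) : avoidProb P S u t = 0 := if_pos hu

theorem avoidProb_succ (u : V) (t : ℕ) :
    avoidProb P S u (t + 1) = if u ∈ S then 0 else (P *ᵥ (avoidProb P S · t)) u := by
  refine if_congr Iff.rfl rfl ?_
  simp only [pow_succ', Matrix.mul_apply, mulVec, dotProduct, of_apply]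
  rw [sum_comm]
  refine sum_congr rfl fun v _ => ?_
  by_cases hv : v ∈ S <;> simp [avoidProb, hv, mul_sum]

variable {P}

theorem avoidProb_nonneg (hP : P ∈ rowStochastic ℝ V) (u : V) (t : ℕ) :
    0 ≤ avoidProb P S u t := by
  induction t generalizing u with
  | zero => rw [avoidProb_zero]; positivity
  | succ t ih =>
    rw [avoidProb_succ]
    split_ifs
    · exact le_rfl
    · exact nonneg_mulVec_of_mem_rowStochastic hP ih u

theorem avoidProb_succ_le_mulVec (hP : P ∈ rowStochastic ℝ V) (u : V) (t : ℕ) :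
    avoidProb P S u (t + 1) ≤ (P *ᵥ (avoidProb P S · t)) u := by
  rw [avoidProb_succ]
  split_ifs
  · exact nonneg_mulVec_of_mem_rowStochastic hP (avoidProb_nonneg S hP · t) u
  · exact le_rfl

theorem avoidProb_add_le_pow_mulVec (hP : P ∈ rowStochastic ℝ V) (u : V) (k T : ℕ) :
    avoidProb P S u (k + T) ≤ ((P ^ T) *ᵥ (avoidProb P S · k)) u := by
  induction T generalizing u with
  | zero => simp
  | succ T ih =>
    rw [pow_succ', ← mulVec_mulVec]
    exact (avoidProb_succ_le_mulVec S hP u (k + T)).trans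
      (mulVec_le_mulVec_of_mem_rowStochastic hP ih u)

theorem avoidProb_zero_le_one (P : Matrix V V ℝ) (u : V) : avoidProb P S u 0 ≤ 1 := by
  rw [avoidProb_zero]
  split_ifs <;> norm_num

theorem avoidProb_le_one (hP : P ∈ rowStochastic ℝ V) (u : V) (t : ℕ) :
    avoidProb P S u t ≤ 1 := by
  calc avoidProb P S u t = avoidProb P S u (0 + t) := by rw [zero_add]
    _ ≤ ((P ^ t) *ᵥ (avoidProb P S · 0)) u := avoidProb_add_le_pow_mulVec S hP u 0 t
    _ ≤ ((P ^ t) *ᵥ 1) u :=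
        mulVec_le_mulVec_of_mem_rowStochastic (pow_mem hP t) (avoidProb_zero_le_one S P) u
    _ = 1 := by rw [one_vecMul_of_mem_rowStochastic (pow_mem hP t), Pi.one_apply]

end Stochastic

section WeightedL2

variable {V : Type*} {π : V → ℝ}

/-- The isometry `f ↦ √π · f` from functions with the weighted inner product `∑ x, π x * f x * g x`
onto Euclidean space. -/
noncomputable def weightedL2 (hπ : ∀ x, 0 < π x) : (V → ℝ) ≃ₗ[ℝ] EuclideanSpace ℝ V :=
  LinearEquiv.piCongrRight (fun x => LinearEquiv.smulOfNeZero ℝ ℝ (√(π x))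
    (Real.sqrt_pos.2 (hπ x)).ne') ≪≫ₗ (WithLp.linearEquiv 2 ℝ (V → ℝ)).symm

variable (hπ : ∀ x, 0 < π x)

theorem weightedL2_apply (f : V → ℝ) (x : V) : weightedL2 hπ f x = √(π x) * f x := rfl

variable [Fintype V]

theorem inner_weightedL2 (f g : V → ℝ) :
    ⟪weightedL2 hπ f, weightedL2 hπ g⟫ = ∑ x, π x * (f x * g x) := by
  rw [PiLp.inner_apply]
  refine sum_congr rfl fun x _ => ?_
  rw [weightedL2_apply, weightedL2_apply, real_inner_eq_re_inner, RCLike.inner_apply]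
  simp only [conj_trivial, RCLike.re_to_real]
  linear_combination (f x * g x) * Real.mul_self_sqrt (hπ x).le

theorem norm_weightedL2_sq (f : V → ℝ) : ‖weightedL2 hπ f‖ ^ 2 = ∑ x, π x * f x ^ 2 := by
  rw [← real_inner_self_eq_norm_sq, inner_weightedL2]
  simp only [sq]

end WeightedL2

/-- `P` is the transition matrix of a Markov chain that is reversible with respect to the strictly
positive probability vector `π`, which is then stationary. -/
structure IsReversibleChain {V : Type*} [Fintype V] [DecidableEq V] (P : Matrix V V ℝ)
    (π : V → ℝ) : Prop where
  mem_rowStochastic : P ∈ rowStochastic ℝ V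
  pos : ∀ x, 0 < π x
  sum_eq_one : ∑ x, π x = 1
  detailed_balance : ∀ x y, π x * P x y = π y * P y x

namespace IsReversibleChain

variable {V : Type*} [Fintype V] [DecidableEq V] {P : Matrix V V ℝ} {π : V → ℝ}

theorem norm_weightedL2_one (h : IsReversibleChain P π) : ‖weightedL2 h.pos 1‖ = 1 := by
  rw [← sq_eq_sq₀ (norm_nonneg _) zero_le_one, norm_weightedL2_sq]
  simp [h.sum_eq_one]

theorem sum_le_one (h : IsReversibleChain P π) (S : Finset V) : ∑ x ∈ S, π x ≤ 1 :=
  h.sum_eq_one ▸ sum_le_univ_sum_of_nonneg fun x => (h.pos x).le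

theorem sum_nonneg (h : IsReversibleChain P π) (S : Finset V) : 0 ≤ ∑ x ∈ S, π x :=
  Finset.sum_nonneg fun x _ => (h.pos x).le

/-- The transition operator of `P`, transported to Euclidean space by `weightedL2`; in coordinates
it is the matrix `√(π x) * P x y / √(π y)`. -/
noncomputable def symmetrization (h : IsReversibleChain P π) :
    Module.End ℝ (EuclideanSpace ℝ V) :=
  (weightedL2 h.pos).conjAlgEquiv ℝ (toLin' P)

theorem symmetrization_pow_weightedL2 (h : IsReversibleChain P π) (k : ℕ) (f : V → ℝ) :
    (h.symmetrization ^ k) (weightedL2 h.pos f) = weightedL2 h.pos ((P ^ k) *ᵥ f) := by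
  rw [symmetrization, ← map_pow, ← toLin'_pow, LinearEquiv.conjAlgEquiv_apply]
  simp only [LinearMap.comp_apply, LinearEquiv.coe_coe, LinearEquiv.symm_apply_apply, toLin'_apply]

theorem symmetrization_weightedL2 (h : IsReversibleChain P π) (f : V → ℝ) :
    h.symmetrization (weightedL2 h.pos f) = weightedL2 h.pos (P *ᵥ f) := by
  simpa using h.symmetrization_pow_weightedL2 1 f

theorem isSymmetric_symmetrization (h : IsReversibleChain P π) : h.symmetrization.IsSymmetric := by
  intro x y
  obtain ⟨f, rfl⟩ := (weightedL2 h.pos).surjective x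
  obtain ⟨g, rfl⟩ := (weightedL2 h.pos).surjective y
  simp only [symmetrization_weightedL2, inner_weightedL2, mulVec, dotProduct, sum_mul, mul_sum]
  rw [sum_comm]
  refine sum_congr rfl fun y _ => sum_congr rfl fun x _ => ?_
  linear_combination (f y * g x) * h.detailed_balance x y

theorem spectrum_symmetrization (h : IsReversibleChain P π) :
    spectrum ℝ h.symmetrization = spectrum ℝ P := by
  rw [symmetrization, AlgEquiv.spectrum_eq, spectrum_toLin']

theorem eigenspace_symmetrization_one_le (h : IsReversibleChain P π)
    (hharm : ∀ f : V → ℝ, P *ᵥ f = f → ∀ x y, f x = f y) :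
    eigenspace h.symmetrization 1 ≤ ℝ ∙ weightedL2 h.pos 1 := by
  intro v hv
  obtain ⟨f, rfl⟩ := (weightedL2 h.pos).surjective v
  rw [Module.End.mem_eigenspace_iff, one_smul, symmetrization_weightedL2,
    (weightedL2 h.pos).injective.eq_iff] at hv
  obtain ⟨c, rfl⟩ : ∃ c : ℝ, f = c • 1 := by
    rcases isEmpty_or_nonempty V with _ | ⟨⟨x⟩⟩
    · exact ⟨0, Subsingleton.elim _ _⟩
    · exact ⟨f x, funext fun y => by simpa using hharm f hv y x⟩
  exact Submodule.mem_span_singleton.2 ⟨c, (map_smul _ c 1).symm⟩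

theorem hasSpectralGap (h : IsReversibleChain P π)
    (hharm : ∀ f : V → ℝ, P *ᵥ f = f → ∀ x y, f x = f y) :
    HasSpectralGap h.symmetrization (weightedL2 h.pos 1) (lambdaMax P) where
  isSymmetric := h.isSymmetric_symmetrization
  norm_eq_one := h.norm_weightedL2_one
  map_eq_self := by
    rw [symmetrization_weightedL2, one_vecMul_of_mem_rowStochastic h.mem_rowStochastic]
  norm_map_le x hx := by
    refine norm_map_le_of_mem_eigenspace_orthogonal h.isSymmetric_symmetrization
      (lambdaMax_nonneg P) (μ₀ := 1) (fun μ hμ => ?_)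
      (Submodule.orthogonal_le (h.eigenspace_symmetrization_one_le hharm)
        (Submodule.mem_orthogonal_singleton_iff_inner_right.2 hx))
    exact abs_le_lambdaMax (h.spectrum_symmetrization ▸ hμ.mem_spectrum)

theorem norm_weightedL2_compl_indicator_sq (h : IsReversibleChain P π) (S : Finset V) :
    ‖weightedL2 h.pos (fun x => if x ∈ S then 0 else 1)‖ ^ 2 = 1 - ∑ x ∈ S, π x := by
  have sum_compl : ∑ x ∈ Sᶜ, π x = 1 - ∑ x ∈ S, π x := by
    rw [eq_sub_iff_add_eq, sum_compl_add_sum, h.sum_eq_one]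
  rw [norm_weightedL2_sq, ← sum_compl, compl_eq_univ_sdiff, ← filter_notMem_eq_sdiff, sum_filter]
  refine sum_congr rfl fun x _ => ?_
  by_cases hx : x ∈ S <;> simp [hx]

theorem inner_weightedL2_one_sq_le (h : IsReversibleChain P π) {S : Finset V} {f : V → ℝ}
    (hf : ∀ x ∈ S, f x = 0) :
    ⟪weightedL2 h.pos 1, weightedL2 h.pos f⟫ ^ 2 ≤
      (1 - ∑ x ∈ S, π x) * ‖weightedL2 h.pos f‖ ^ 2 := by
  have inner_eq : ⟪weightedL2 h.pos 1, weightedL2 h.pos f⟫ =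
      ⟪weightedL2 h.pos (fun x => if x ∈ S then 0 else 1), weightedL2 h.pos f⟫ := by
    simp only [inner_weightedL2]
    refine sum_congr rfl fun x _ => ?_
    by_cases hx : x ∈ S <;> simp [hx, hf]
  rw [inner_eq, ← h.norm_weightedL2_compl_indicator_sq, ← mul_pow, ← sq_abs]
  exact pow_le_pow_left₀ (abs_nonneg _) (abs_real_inner_le_norm _ _) 2

theorem abs_inner_weightedL2_one_mul_le (h : IsReversibleChain P π) {S : Finset V} {f g : V → ℝ}
    (hf : ∀ x ∈ S, f x = 0) (hg : ∀ x ∈ S, g x = 0) :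
    |⟪weightedL2 h.pos 1, weightedL2 h.pos f⟫| * |⟪weightedL2 h.pos 1, weightedL2 h.pos g⟫| ≤
      (1 - ∑ x ∈ S, π x) * (‖weightedL2 h.pos f‖ * ‖weightedL2 h.pos g‖) := by
  have hS : 0 ≤ 1 - ∑ x ∈ S, π x := sub_nonneg.2 (h.sum_le_one S)
  refine le_of_sq_le_sq ?_ (by positivity)
  rw [mul_pow, sq_abs, sq_abs]
  refine (mul_le_mul (h.inner_weightedL2_one_sq_le hf) (h.inner_weightedL2_one_sq_le hg)
    (sq_nonneg _) (by positivity)).trans_eq ?_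
  ring

theorem one_sub_mul_sum_nonneg (h : IsReversibleChain P π) {l : ℝ} (hl0 : 0 ≤ l)
    (S : Finset V) : 0 ≤ 1 - (1 - l) * ∑ x ∈ S, π x :=
  sub_nonneg.2 (mul_le_one₀ (by linarith) (h.sum_nonneg S) (h.sum_le_one S))

theorem norm_weightedL2_killed_le (h : IsReversibleChain P π) {l : ℝ} (hl0 : 0 ≤ l)
    (hl1 : l ≤ 1) (hgap : HasSpectralGap h.symmetrization (weightedL2 h.pos 1) l)
    {S : Finset V} {f : V → ℝ} (hf : ∀ x ∈ S, f x = 0) :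
    ‖weightedL2 h.pos (fun x => if x ∈ S then 0 else (P *ᵥ f) x)‖ ≤
      (1 - (1 - l) * ∑ x ∈ S, π x) * ‖weightedL2 h.pos f‖ := by
  set g : V → ℝ := fun x => if x ∈ S then 0 else (P *ᵥ f) x with hg
  set x := weightedL2 h.pos f
  set y := weightedL2 h.pos g
  set e := weightedL2 h.pos 1
  set δ := ∑ x ∈ S, π x
  have norm_sq_eq : ‖y‖ ^ 2 = ⟪y, h.symmetrization x⟫ := by
    rw [h.symmetrization_weightedL2, inner_weightedL2, norm_weightedL2_sq]
    refine sum_congr rfl fun x _ => ?_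
    by_cases hx : x ∈ S <;> simp [hg, hx, sq]
  have mean_mul_le : |⟪e, x⟫| * |⟪e, y⟫| ≤ (1 - δ) * (‖x‖ * ‖y‖) :=
    h.abs_inner_weightedL2_one_mul_le hf fun x hx => if_pos hx
  have norm_mul_norm_le : ‖y‖ * ‖y‖ ≤ (1 - (1 - l) * δ) * ‖x‖ * ‖y‖ := by
    calc ‖y‖ * ‖y‖ ≤ (1 - l) * (|⟪e, x⟫| * |⟪e, y⟫|) + l * (‖x‖ * ‖y‖) := by
          rw [← sq, norm_sq_eq]
          exact hgap.inner_map_le hl0 x y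
      _ ≤ (1 - l) * ((1 - δ) * (‖x‖ * ‖y‖)) + l * (‖x‖ * ‖y‖) := by gcongr
      _ = (1 - (1 - l) * δ) * ‖x‖ * ‖y‖ := by ring
  rcases (norm_nonneg y).eq_or_lt with hy | hy
  · rw [← hy]
    exact mul_nonneg (h.one_sub_mul_sum_nonneg hl0 S) (norm_nonneg x)
  · exact le_of_mul_le_mul_right norm_mul_norm_le hy

theorem norm_weightedL2_avoidProb_le (h : IsReversibleChain P π) {l : ℝ} (hl0 : 0 ≤ l)
    (hl1 : l ≤ 1) (hgap : HasSpectralGap h.symmetrization (weightedL2 h.pos 1) l)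
    (S : Finset V) (k : ℕ) :
    ‖weightedL2 h.pos (avoidProb P S · k)‖ ≤ (1 - (1 - l) * ∑ x ∈ S, π x) ^ k := by
  induction k with
  | zero =>
    simp only [avoidProb_zero, pow_zero]
    refine le_of_sq_le_sq ?_ zero_le_one
    rw [h.norm_weightedL2_compl_indicator_sq]
    linarith [h.sum_nonneg S]
  | succ k ih =>
    simp only [avoidProb_succ]
    refine (h.norm_weightedL2_killed_le hl0 hl1 hgap fun x hx =>
      avoidProb_of_mem P S hx k).trans ?_
    rw [pow_succ']
    exact mul_le_mul_of_nonneg_left ih (h.one_sub_mul_sum_nonneg hl0 S)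

theorem pow_mulVec_apply_le (h : IsReversibleChain P π) {l : ℝ} (hl0 : 0 ≤ l)
    (hgap : HasSpectralGap h.symmetrization (weightedL2 h.pos 1) l) (f : V → ℝ) (T : ℕ) (u : V) :
    ((P ^ T) *ᵥ f) u ≤ ‖weightedL2 h.pos f‖ * (1 + l ^ T / √(π u)) := by
  have sqrt_pos : 0 < √(π u) := Real.sqrt_pos.2 (h.pos u)
  set x := weightedL2 h.pos f
  set e := weightedL2 h.pos 1
  have coord_eq : ((h.symmetrization ^ T) x - ⟪e, x⟫ • e) u =
      √(π u) * ((P ^ T) *ᵥ f) u - ⟪e, x⟫ * √(π u) := by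
    rw [PiLp.sub_apply, PiLp.smul_apply, h.symmetrization_pow_weightedL2, weightedL2_apply,
      weightedL2_apply, Pi.one_apply, mul_one, smul_eq_mul]
  have coord_le : √(π u) * ((P ^ T) *ᵥ f) u - ⟪e, x⟫ * √(π u) ≤ l ^ T * ‖x‖ := by
    rw [← coord_eq]
    exact (le_abs_self _).trans
      ((PiLp.norm_apply_le _ u).trans (hgap.norm_pow_apply_sub_le hl0 T x))
  have mean_le : ⟪e, x⟫ ≤ ‖x‖ := by
    simpa [e, h.norm_weightedL2_one] using real_inner_le_norm e x
  refine le_of_mul_le_mul_left ?_ sqrt_pos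
  calc √(π u) * ((P ^ T) *ᵥ f) u ≤ ‖x‖ * √(π u) + l ^ T * ‖x‖ := by
        linarith [mul_le_mul_of_nonneg_right mean_le sqrt_pos.le]
    _ = √(π u) * (‖x‖ * (1 + l ^ T / √(π u))) := by field_simp

theorem avoidProb_add_le (h : IsReversibleChain P π) {l : ℝ} (hl0 : 0 ≤ l) (hl1 : l ≤ 1)
    (hgap : HasSpectralGap h.symmetrization (weightedL2 h.pos 1) l)
    (S : Finset V) (u : V) (k T : ℕ) :
    avoidProb P S u (k + T) ≤
      (1 - (1 - l) * ∑ x ∈ S, π x) ^ k * (1 + l ^ T / √(π u)) :=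
  calc avoidProb P S u (k + T) ≤ ((P ^ T) *ᵥ (avoidProb P S · k)) u :=
        avoidProb_add_le_pow_mulVec S h.mem_rowStochastic u k T
    _ ≤ ‖weightedL2 h.pos (avoidProb P S · k)‖ * (1 + l ^ T / √(π u)) :=
        h.pow_mulVec_apply_le hl0 hgap _ T u
    _ ≤ _ := mul_le_mul_of_nonneg_right (h.norm_weightedL2_avoidProb_le hl0 hl1 hgap S k)
        (by positivity)

end IsReversibleChain

theorem one_sub_pow_le_exp_neg_mul {x : ℝ} (hx : x ≤ 1) (k : ℕ) :
    (1 - x) ^ k ≤ Real.exp (-(x * k)) :=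
  calc (1 - x) ^ k ≤ Real.exp (-x) ^ k :=
        pow_le_pow_left₀ (sub_nonneg.2 hx) (Real.one_sub_le_exp_neg x) k
    _ = Real.exp (-(x * k)) := by rw [← Real.exp_nat_mul]; ring_nf

theorem exists_pow_le_exp_neg {l L : ℝ} {t : ℕ} (hl0 : 0 ≤ l) (hL : 0 ≤ L)
    (ht : L + 1 < (1 - l) * t) :
    ∃ T ≤ t, l ^ T ≤ Real.exp (-L) ∧ (1 - l) * T ≤ L + 1 := by
  have gap_pos : 0 < 1 - l := pos_of_mul_pos_left (by linarith) t.cast_nonneg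
  have le_ceil : L ≤ (1 - l) * ⌈L / (1 - l)⌉₊ := by
    rw [← div_le_iff₀' gap_pos]
    exact Nat.le_ceil _
  have ceil_le : (1 - l) * ⌈L / (1 - l)⌉₊ ≤ L + 1 :=
    calc (1 - l) * ⌈L / (1 - l)⌉₊ ≤ (1 - l) * (L / (1 - l) + 1) := by
          gcongr
          exact (Nat.ceil_lt_add_one (by positivity)).le
      _ = L + (1 - l) := by field_simp
      _ ≤ L + 1 := by linarith
  refine ⟨⌈L / (1 - l)⌉₊, ?_, ?_, ceil_le⟩
  · exact_mod_cast le_of_mul_le_mul_left (ceil_le.trans ht.le) gap_pos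
  · have pow_le := one_sub_pow_le_exp_neg_mul (x := 1 - l) (by linarith) ⌈L / (1 - l)⌉₊
    rw [sub_sub_cancel] at pow_le
    exact pow_le.trans (Real.exp_le_exp.2 (neg_le_neg le_ceil))

theorem IsReversibleChain.avoidProb_le_two_mul_exp {V : Type*} [Fintype V] [DecidableEq V]
    {P : Matrix V V ℝ} {π : V → ℝ} (h : IsReversibleChain P π)
    (hharm : ∀ f : V → ℝ, P *ᵥ f = f → ∀ x y, f x = f y) (S : Finset V) (u : V) (t : ℕ) :
    avoidProb P S u t ≤ 2 * Real.exp (-((∑ x ∈ S, π x) *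
      ((1 - lambdaMax P) * t - Real.log (1 / √(π u)) - 1))) := by
  set l := lambdaMax P
  set δ := ∑ x ∈ S, π x
  set L := Real.log (1 / √(π u)) with hL
  have hl0 : 0 ≤ l := lambdaMax_nonneg P
  have hl1 : l ≤ 1 := lambdaMax_le_one_of_mem_rowStochastic h.mem_rowStochastic
  have sqrt_pos : 0 < √(π u) := Real.sqrt_pos.2 (h.pos u)
  have hL0 : 0 ≤ L := Real.log_nonneg <| (one_le_div sqrt_pos).2 <| Real.sqrt_le_one.2 <| by
    simpa using h.sum_le_one {u}
  rcases le_or_gt ((1 - l) * t) (L + 1) with ht | ht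
  · have : 1 ≤ Real.exp (-(δ * ((1 - l) * t - L - 1))) := Real.one_le_exp <|
      neg_nonneg.2 (mul_nonpos_of_nonneg_of_nonpos (h.sum_nonneg S) (by linarith))
    linarith [avoidProb_le_one S h.mem_rowStochastic u t]
  · obtain ⟨T, hTt, pow_le, hT⟩ := exists_pow_le_exp_neg hl0 hL0 ht
    obtain ⟨k, rfl⟩ := Nat.exists_eq_add_of_le' hTt
    have mixed : 1 + l ^ T / √(π u) ≤ 2 := by
      have : l ^ T / √(π u) ≤ 1 := (div_le_one sqrt_pos).2 <| pow_le.trans_eq <| by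
        rw [hL, one_div, Real.log_inv, neg_neg, Real.exp_log sqrt_pos]
      linarith
    calc avoidProb P S u (k + T) ≤ (1 - (1 - l) * δ) ^ k * (1 + l ^ T / √(π u)) :=
          h.avoidProb_add_le hl0 hl1 (h.hasSpectralGap hharm) S u k T
      _ ≤ Real.exp (-((1 - l) * δ * k)) * 2 := by
          gcongr
          exact one_sub_pow_le_exp_neg_mul (sub_nonneg.1 (h.one_sub_mul_sum_nonneg hl0 S)) k
      _ = 2 * Real.exp (-(δ * ((1 - l) * k))) := by ring_nf
      _ ≤ _ := by
          push_cast
          gcongr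
          · exact h.sum_nonneg S
          · linarith

section LazyWalk

variable {V : Type*} {G : SimpleGraph V}

theorem one_le_ncard_neighborSet [Finite V] [Nontrivial V] (hG : G.Connected) (v : V) :
    (1 : ℝ) ≤ (G.neighborSet v).ncard := by
  obtain ⟨w, hw⟩ := hG.preconnected.exists_adj_of_nontrivial v
  exact_mod_cast (Set.ncard_pos).2 ⟨w, hw⟩

theorem ncard_edgeSet_pos [Finite V] [Nontrivial V] (hG : G.Connected) :
    (0 : ℝ) < G.edgeSet.ncard := by
  obtain ⟨v⟩ := hG.nonempty
  obtain ⟨w, hw⟩ := hG.preconnected.exists_adj_of_nontrivial v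
  exact_mod_cast (Set.ncard_pos).2 ⟨s(v, w), hw⟩

variable [Fintype V] (G)

theorem ncard_neighborSet_eq_degree (v : V) : (G.neighborSet v).ncard = G.degree v :=
  Set.ncard_eq_toFinset_card' _

theorem sum_ncard_neighborSet :
    ∑ v, ((G.neighborSet v).ncard : ℝ) = 2 * (G.edgeSet.ncard : ℝ) := by
  have card_edges : G.edgeSet.ncard = G.edgeFinset.card := Set.ncard_eq_toFinset_card' _
  simp only [ncard_neighborSet_eq_degree, card_edges]
  exact_mod_cast G.sum_degrees_eq_twice_card_edges

theorem two_mul_ncard_edgeSet_le_card_sq :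
    2 * (G.edgeSet.ncard : ℝ) ≤ (Fintype.card V : ℝ) ^ 2 := by
  rw [← sum_ncard_neighborSet]
  calc ∑ v, ((G.neighborSet v).ncard : ℝ) ≤ ∑ _v : V, (Fintype.card V : ℝ) := by
        gcongr with v
        exact (ncard_neighborSet_eq_degree G v).trans_le (G.degree_lt_card_verts v).le
    _ = (Fintype.card V : ℝ) ^ 2 := by simp [sq]

variable {G}

theorem one_div_sqrt_stationary_le_card [Nontrivial V] (hG : G.Connected) (v : V) :
    1 / √((G.neighborSet v).ncard / (2 * G.edgeSet.ncard) : ℝ) ≤ Fintype.card V := by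
  have edges_pos := ncard_edgeSet_pos hG
  rw [one_div, ← Real.sqrt_inv, inv_div, Real.sqrt_le_left (by positivity)]
  exact (div_le_self (by positivity) (one_le_ncard_neighborSet hG v)).trans
    (two_mul_ncard_edgeSet_le_card_sq G)

variable [DecidableEq V]

theorem lazyMatrix_mulVec_apply {v : V} (hv : ((G.neighborSet v).ncard : ℝ) ≠ 0) (f : V → ℝ) :
    (lazyMatrix G *ᵥ f) v = f v - (G.lapMatrix ℝ *ᵥ f) v / (2 * (G.neighborSet v).ncard) := by
  have mulVec_eq : (lazyMatrix G *ᵥ f) v =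
      f v / 2 + (∑ w ∈ G.neighborFinset v, f w) / (2 * (G.neighborSet v).ncard) := by
    simp only [mulVec, dotProduct, lazyMatrix, of_apply, add_mul, sum_add_distrib, ite_mul,
      zero_mul, sum_ite_eq, mem_univ, if_true, sum_div, G.neighborFinset_eq_filter, sum_filter]
    congr 1
    · ring
    · exact sum_congr rfl fun w _ => by rw [ite_div, zero_div, one_div_mul_eq_div]
  rw [mulVec_eq, SimpleGraph.lapMatrix_mulVec_apply, ← ncard_neighborSet_eq_degree]
  field_simp
  ring

theorem ncard_neighborSet_mul_lazyMatrix (v w : V) :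
    ((G.neighborSet v).ncard : ℝ) * lazyMatrix G v w =
      (G.neighborSet w).ncard * lazyMatrix G w v := by
  rcases eq_or_ne v w with rfl | hne
  · rfl
  · simp only [lazyMatrix, of_apply, hne, hne.symm, if_false, zero_add, G.adj_comm w v]
    split_ifs with hadj
    · have hv : (G.neighborSet v).ncard ≠ 0 := ((Set.ncard_pos).2 ⟨w, hadj⟩).ne'
      have hw : (G.neighborSet w).ncard ≠ 0 := ((Set.ncard_pos).2 ⟨v, hadj.symm⟩).ne'
      field_simp
    · simp

theorem lazyMatrix_mem_rowStochastic (hd : ∀ v, ((G.neighborSet v).ncard : ℝ) ≠ 0) :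
    lazyMatrix G ∈ rowStochastic ℝ V := by
  refine ⟨fun v w => ?_, funext fun v => ?_⟩
  · rw [lazyMatrix, of_apply]
    positivity
  · have lap_one : G.lapMatrix ℝ *ᵥ 1 = 0 := G.lapMatrix_mulVec_const_eq_zero
    rw [lazyMatrix_mulVec_apply (hd v), lap_one, Pi.zero_apply, zero_div, sub_zero]

theorem eq_of_lazyMatrix_mulVec_eq_self [Nontrivial V] (hG : G.Connected) (f : V → ℝ)
    (hf : lazyMatrix G *ᵥ f = f) (v w : V) : f v = f w := by
  have lap_eq_zero : G.lapMatrix ℝ *ᵥ f = 0 := funext fun x => by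
    have hx : ((G.neighborSet x).ncard : ℝ) ≠ 0 := by linarith [one_le_ncard_neighborSet hG x]
    have := lazyMatrix_mulVec_apply hx f
    rw [hf, eq_comm, sub_eq_self, div_eq_zero_iff] at this
    exact this.resolve_right (mul_ne_zero two_ne_zero hx)
  exact G.lapMatrix_mulVec_eq_zero_iff_forall_reachable.1 lap_eq_zero v w (hG.preconnected v w)

theorem isReversibleChain_lazyMatrix [Nontrivial V] (hG : G.Connected) :
    IsReversibleChain (lazyMatrix G)
      fun v => ((G.neighborSet v).ncard : ℝ) / (2 * G.edgeSet.ncard) := by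
  have degree_pos (v : V) : (0 : ℝ) < (G.neighborSet v).ncard :=
    one_pos.trans_le (one_le_ncard_neighborSet hG v)
  have edges_pos := ncard_edgeSet_pos hG
  refine ⟨lazyMatrix_mem_rowStochastic fun v => (degree_pos v).ne',
    fun v => div_pos (degree_pos v) (by positivity), ?_, fun v w => ?_⟩
  · rw [← sum_div, sum_ncard_neighborSet, div_self (by positivity)]
  · rw [div_mul_eq_mul_div, div_mul_eq_mul_div, ncard_neighborSet_mul_lazyMatrix]

end LazyWalk

theorem stmt5_general {V : Type*} [Fintype V] [DecidableEq V] [Nontrivial V] {G : SimpleGraph V}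
    (hG : G.Connected) (S : Finset V) (u : V) (t : ℕ) :
    avoidProb (lazyMatrix G) S u t ≤
      2 * Real.exp (-((∑ v ∈ S, ((G.neighborSet v).ncard : ℝ)) / (2 * G.edgeSet.ncard) *
        ((1 - lambdaMax (lazyMatrix G)) * t - Real.log (Fintype.card V) - 1))) := by
  have h := isReversibleChain_lazyMatrix hG
  refine (h.avoidProb_le_two_mul_exp (eq_of_lazyMatrix_mulVec_eq_self hG) S u t).trans ?_
  rw [← sum_div]
  gcongr
  · exact one_div_pos.2 (Real.sqrt_pos.2 (h.pos u))
  · exact one_div_sqrt_stationary_le_card hG u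

theorem two_mul_exp_neg_le {D m g L t : ℝ} (hm : 0 < m) (hg : 0 ≤ g) (ht : 0 ≤ t) (hL : 1 ≤ L)
    (hD0 : 0 ≤ D) (hD : D ≤ m / L) :
    2 * Real.exp (-(D / (2 * m) * (g * t - L - 1))) ≤
      2 * Real.exp 1 * Real.exp (-(t * D * g / (14 * m))) := by
  have mul_le : D * L ≤ m := (le_div_iff₀ (by linarith)).1 hD
  have burn_in_le : D / (2 * m) * (L + 1) ≤ 1 := by
    rw [div_mul_eq_mul_div, div_le_one (by positivity)]
    linarith [le_mul_of_one_le_right hD0 hL]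
  have rate_le : t * D * g / (14 * m) ≤ D / (2 * m) * (g * t) := by
    rw [div_mul_eq_mul_div, mul_comm t D, mul_assoc, mul_comm t g]
    gcongr
    norm_num
  rw [mul_assoc, ← Real.exp_add]
  gcongr
  linarith

/-- There are absolute constants `c, C > 0` such that, for all sufficiently
large `n`: for every connected graph `G` on `n` vertices with `m` edges, every `S ⊆ V` with
`|S| = s` and total degree `d(S) ≤ m/(C·log n)`, every start vertex `u ∉ S`, and every
integer `t ≥ C·m/(s·(1 − λmax))`, the probability that the lazy simple random walk started
at `u` visits no vertex of `S` during steps `0,…,t` is at most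
`c·exp(−t·d(S)·(1 − λmax)/(14m))`. -/
theorem stmt5 :
    ∃ c C : ℝ, 0 < c ∧ 0 < C ∧ ∃ N : ℕ,
      ∀ (V : Type) [Fintype V] [DecidableEq V] (G : SimpleGraph V),
        N ≤ Fintype.card V → G.Connected →
        ∀ (S : Finset V) (u : V), u ∉ S →
          (∑ v ∈ S, ((G.neighborSet v).ncard : ℝ)) ≤
            (G.edgeSet.ncard : ℝ) / (C * Real.log (Fintype.card V)) →
          ∀ t : ℕ,
            C * (G.edgeSet.ncard : ℝ) / (S.card * (1 - lambdaMax (lazyMatrix G))) ≤ (t : ℝ) →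
            avoidProb (lazyMatrix G) S u t ≤
              c * Real.exp (-((t : ℝ) * (∑ v ∈ S, ((G.neighborSet v).ncard : ℝ)) *
                  (1 - lambdaMax (lazyMatrix G)) / (14 * (G.edgeSet.ncard : ℝ)))) := by
  refine ⟨2 * Real.exp 1, 1, by positivity, one_pos, 3, fun V _ _ G hn hG S u _ hS t _ => ?_⟩
  have : Nontrivial V := Fintype.one_lt_card_iff_nontrivial.1 (by omega)
  have log_ge_one : 1 ≤ Real.log (Fintype.card V) := by
    rw [Real.le_log_iff_exp_le (by positivity)]
    exact Real.exp_one_lt_three.le.trans (by exact_mod_cast hn)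
  have lambdaMax_le_one : lambdaMax (lazyMatrix G) ≤ 1 :=
    lambdaMax_le_one_of_mem_rowStochastic (isReversibleChain_lazyMatrix hG).mem_rowStochastic
  rw [one_mul] at hS
  exact (stmt5_general hG S u t).trans <| two_mul_exp_neg_le (ncard_edgeSet_pos hG)
    (sub_nonneg.2 lambdaMax_le_one) t.cast_nonneg log_ge_one (by positivity) hS
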